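/- Let ρ = (α,β) be an isolated relation in a gentle quiver 𝚫 with ℤ·ρ ≠ {ρ}, and let 𝚫' be the quiver obtained from 𝚫 by completing ρ (so 𝚫' is gentle). Then, identifying antipaths in 𝚫 with the antipaths in 𝚫' not involving the new arrow γ_ρ: 𝒩_{𝚫'} = 𝒩_𝚫 ∖ {ρ}; the orbit set 𝒩_{𝚫'}/ℤ consists of all orbits 𝒪' ∈ 𝒩_𝚫/ℤ with 𝒪' ≠ ℤ·ρ together with the set (ℤ·ρ) ∖ {ρ}; moreover 𝒞_{𝚫'} = 𝒞_𝚫 ∪ {α, β, γ_ρ} and 𝒞_{𝚫'}/ℤ = 𝒞_𝚫/ℤ ∪ {{α, β, γ_ρ}}. -/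

import Mathlib

/-! Common formalization infrastructure for gentle quivers (Bobinski–Buan,
    "Derived equivalence classification of gentle cluster tilted algebras"). -/

/-- A (finite) quiver with (length-two, monomial) relations.  Vertices and
arrows are natural numbers; `V` and `A` are the finite sets of vertices and
arrows, `src`/`tgt` give the start and terminus of each arrow, and `rel` is the
set of relations, a relation `(a, b)` standing for the length-two path
`a·b` (so `src a = tgt b`). -/
structure QuivRel where
  V : Finset ℕ
  A : Finset ℕ
  src : ℕ → ℕ
  tgt : ℕ → ℕ
  rel : Finset (ℕ × ℕ)

namespace GentleQuiv

/-- Two vertices are adjacent if some arrow joins them (in either direction). -/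
def Adj (Q : QuivRel) (x y : ℕ) : Prop :=
  ∃ a ∈ Q.A, (Q.src a = x ∧ Q.tgt a = y) ∨ (Q.src a = y ∧ Q.tgt a = x)

/-- A quiver is connected if any two of its vertices are joined by a walk. -/
def Connected (Q : QuivRel) : Prop :=
  ∀ x ∈ Q.V, ∀ y ∈ Q.V, Relation.ReflTransGen (Adj Q) x y

/-- `l = [α₁, …, αₙ]` is a (nonempty) path in the quiver: consecutive arrows
compose, i.e. `s αᵢ = t αᵢ₊₁`. -/
def IsPathList (Q : QuivRel) (l : List ℕ) : Prop :=
  l ≠ [] ∧ (∀ a ∈ l, a ∈ Q.A) ∧ l.Chain' (fun a b => Q.src a = Q.tgt b)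

/-- The path `l` contains a subpath (two consecutive arrows) lying in `R`. -/
def HasRelSubpath (Q : QuivRel) (l : List ℕ) : Prop :=
  ∃ a b, (a, b) ∈ Q.rel ∧ [a, b] <:+: l

/-- Gentle quiver: connected, relations are composable pairs of arrows, at most
two arrows in/out of every vertex, the usual gentleness conditions on
relations, and a global bound forcing finite dimensionality. -/
def IsGentle (Q : QuivRel) : Prop :=
  Q.V.Nonempty ∧
  (∀ a ∈ Q.A, Q.src a ∈ Q.V ∧ Q.tgt a ∈ Q.V) ∧
  Connected Q ∧
  (∀ ρ ∈ Q.rel, ρ.1 ∈ Q.A ∧ ρ.2 ∈ Q.A ∧ Q.src ρ.1 = Q.tgt ρ.2) ∧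
  (∀ x, (Q.A.filter fun a => Q.src a = x).card ≤ 2) ∧
  (∀ x, (Q.A.filter fun a => Q.tgt a = x).card ≤ 2) ∧
  (∀ a ∈ Q.A, (Q.A.filter fun b => Q.src b = Q.tgt a ∧ (b, a) ∉ Q.rel).card ≤ 1) ∧
  (∀ a ∈ Q.A, (Q.A.filter fun c => Q.tgt c = Q.src a ∧ (a, c) ∉ Q.rel).card ≤ 1) ∧
  (∀ a ∈ Q.A, (Q.A.filter fun b => (b, a) ∈ Q.rel).card ≤ 1) ∧
  (∀ a ∈ Q.A, (Q.A.filter fun c => (a, c) ∈ Q.rel).card ≤ 1) ∧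
  (∃ n : ℕ, ∀ l : List ℕ, IsPathList Q l → l.length = n → HasRelSubpath Q l)

/-- A choice of functions `σ, τ : Δ₁ → {±1}` as in Avella-Alaminos–Geiss. -/
structure SigmaTau (Q : QuivRel) where
  σ : ℕ → ℤ
  τ : ℕ → ℤ
  σ_pm : ∀ a ∈ Q.A, σ a = 1 ∨ σ a = -1
  τ_pm : ∀ a ∈ Q.A, τ a = 1 ∨ τ a = -1
  σ_src : ∀ a ∈ Q.A, ∀ b ∈ Q.A, a ≠ b → Q.src a = Q.src b → σ a = -σ b
  τ_tgt : ∀ a ∈ Q.A, ∀ b ∈ Q.A, a ≠ b → Q.tgt a = Q.tgt b → τ a = -τ b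
  rel_iff : ∀ a ∈ Q.A, ∀ b ∈ Q.A, Q.src a = Q.tgt b → ((a, b) ∈ Q.rel ↔ σ a = τ b)

/-- A thread: either a trivial path/antipath `1_{x,ε}` at a vertex `x` with a
sign `ε`, or a sequence of arrows of positive length. -/
inductive Thread where
  | triv (x : ℕ) (ε : ℤ) : Thread
  | arrows (l : List ℕ) : Thread
deriving DecidableEq

/-- Source of a thread. -/
def Thread.source (Q : QuivRel) : Thread → ℕ
  | .triv x _ => x
  | .arrows l => Q.src l.getLast!

/-- Target of a thread. -/
def Thread.target (Q : QuivRel) : Thread → ℕ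
  | .triv x _ => x
  | .arrows l => Q.tgt l.head!

/-- `σω` (for paths and antipaths alike; `σ 1_{x,ε} = ε = σ 1'_{x,ε}`). -/
def Thread.sigma {Q : QuivRel} (st : SigmaTau Q) : Thread → ℤ
  | .triv _ ε => ε
  | .arrows l => st.σ l.getLast!

/-- `τω` when `ω` is regarded as a path (`τ 1_{x,ε} = -ε`). -/
def Thread.tauPath {Q : QuivRel} (st : SigmaTau Q) : Thread → ℤ
  | .triv _ ε => -ε
  | .arrows l => st.τ l.head!

/-- `τω` when `ω` is regarded as an antipath (`τ 1'_{x,ε} = ε`). -/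
def Thread.tauAnti {Q : QuivRel} (st : SigmaTau Q) : Thread → ℤ
  | .triv _ ε => ε
  | .arrows l => st.τ l.head!

/-- Length of a thread. -/
def Thread.len : Thread → ℕ
  | .triv _ _ => 0
  | .arrows l => l.length

/-- A path in `𝚫` of positive length (no two consecutive arrows in `R`). -/
def IsPermList (Q : QuivRel) (l : List ℕ) : Prop :=
  IsPathList Q l ∧ l.Chain' (fun a b => (a, b) ∉ Q.rel)

/-- An antipath in `𝚫` of positive length (all consecutive pairs in `R`). -/
def IsAntiList (Q : QuivRel) (l : List ℕ) : Prop :=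
  l ≠ [] ∧ (∀ a ∈ l, a ∈ Q.A) ∧ l.Chain' (fun a b => (a, b) ∈ Q.rel)

/-- A thread is a path in `𝚫` (including trivial ones). -/
def IsPathThread (Q : QuivRel) : Thread → Prop
  | .triv x ε => x ∈ Q.V ∧ (ε = 1 ∨ ε = -1)
  | .arrows l => IsPermList Q l

/-- A thread is an antipath in `𝚫` (including trivial ones). -/
def IsAntiThread (Q : QuivRel) : Thread → Prop
  | .triv x ε => x ∈ Q.V ∧ (ε = 1 ∨ ε = -1)
  | .arrows l => IsAntiList Q l

/-- `w ∈ ℳ`: `w` is a maximal path of `𝚫`. -/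
def InM (Q : QuivRel) (st : SigmaTau Q) (w : Thread) : Prop :=
  IsPathThread Q w ∧
  (¬ ∃ a ∈ Q.A, Q.src a = w.target Q ∧ st.σ a = -(w.tauPath st)) ∧
  (¬ ∃ b ∈ Q.A, Q.tgt b = w.source Q ∧ st.τ b = -(w.sigma st))

/-- `w ∈ 𝒩`: `w` is a maximal antipath of `𝚫`. -/
def InN (Q : QuivRel) (st : SigmaTau Q) (w : Thread) : Prop :=
  IsAntiThread Q w ∧
  (¬ ∃ a ∈ Q.A, Q.src a = w.target Q ∧ st.σ a = w.tauAnti st) ∧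
  (¬ ∃ b ∈ Q.A, Q.tgt b = w.source Q ∧ st.τ b = w.sigma st)

/-- The graph of the bijection `Φ = φ ∘ ψ : 𝒩 → 𝒩`:  `PhiRel Q st w w'` holds
iff `w, w' ∈ 𝒩` and the maximal path `ψ w` (with `s(ψw) = sw`, `σ(ψw) = -σw`)
satisfies `t w' = t (ψ w)` and `τ w' = -τ(ψ w)`, i.e. `w' = φ (ψ w) = Φ w`. -/
def PhiRel (Q : QuivRel) (st : SigmaTau Q) (w w' : Thread) : Prop :=
  InN Q st w ∧ InN Q st w' ∧
  ∃ m : Thread, InM Q st m ∧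
    m.source Q = w.source Q ∧ m.sigma st = -(w.sigma st) ∧
    w'.target Q = m.target Q ∧ w'.tauAnti st = -(m.tauPath st)

/-- `O` is an orbit of the `ℤ`-action on `𝒩` induced by `Φ`. -/
def NOrbit (Q : QuivRel) (st : SigmaTau Q) (O : Set Thread) : Prop :=
  ∃ w, InN Q st w ∧ O = {w' | Relation.EqvGen (PhiRel Q st) w w'}

/-- `p(𝒪) = |𝒪|` for an orbit `𝒪 ∈ 𝒩/ℤ`. -/
noncomputable def pN (O : Set Thread) : ℕ := O.ncard

/-- `q(𝒪) = Σ_{ω ∈ 𝒪} ℓ(ω)` for an orbit `𝒪 ∈ 𝒩/ℤ`. -/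
noncomputable def qN (O : Set Thread) : ℕ := ∑ᶠ w ∈ O, Thread.len w

/-- `a ∈ 𝒞`: the arrow `a` occurs in no maximal antipath. -/
def InC (Q : QuivRel) (st : SigmaTau Q) (a : ℕ) : Prop :=
  a ∈ Q.A ∧ ¬ ∃ l : List ℕ, InN Q st (.arrows l) ∧ a ∈ l

/-- The graph of the bijection `Ψ : 𝒞 → 𝒞`. -/
def PsiRel (Q : QuivRel) (st : SigmaTau Q) (a b : ℕ) : Prop :=
  InC Q st a ∧ InC Q st b ∧ Q.tgt b = Q.src a ∧ st.τ b = st.σ a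

/-- `O` is an orbit of the `ℤ`-action on `𝒞` induced by `Ψ`. -/
def COrbit (Q : QuivRel) (st : SigmaTau Q) (O : Set ℕ) : Prop :=
  ∃ a, InC Q st a ∧ O = {b | Relation.EqvGen (PsiRel Q st) a b}

/-- The Avella-Alaminos–Geiss invariant `f_𝚫 : ℕ² → ℕ`:  `f_𝚫 (p,q)` counts the
orbits `𝒪 ∈ 𝒩/ℤ ⊔ 𝒞/ℤ` with `p(𝒪) = p` and `q(𝒪) = q`. -/
noncomputable def fInv (Q : QuivRel) (st : SigmaTau Q) : ℕ × ℕ → ℕ := fun pq =>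
  {O : Set Thread | NOrbit Q st O ∧ pN O = pq.1 ∧ qN O = pq.2}.ncard +
  {O : Set ℕ | COrbit Q st O ∧ pq.1 = 0 ∧ O.ncard = pq.2}.ncard

/-- `[p, q] : ℕ² → ℕ`, the characteristic function of `{(p, q)}`. -/
def charFn (p q : ℕ) : ℕ × ℕ → ℕ := fun pq => if pq = (p, q) then 1 else 0

/-- Tree type: `|Δ₀| = |Δ₁| + 1`. -/
def TreeType (Q : QuivRel) : Prop := Q.V.card = Q.A.card + 1

/-- Removing a set of arrows (keeping all vertices); relations containing a
removed arrow are discarded. -/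
def deleteArrows (Q : QuivRel) (S : Finset ℕ) : QuivRel where
  V := Q.V
  A := Q.A \ S
  src := Q.src
  tgt := Q.tgt
  rel := Q.rel.filter fun ρ => ρ.1 ∉ S ∧ ρ.2 ∉ S

/-- Branch arrow: removing it disconnects the quiver. -/
def BranchArrow (Q : QuivRel) (a : ℕ) : Prop :=
  a ∈ Q.A ∧ ¬ Connected (deleteArrows Q {a})

/-- Cycle arrow: removing it leaves the quiver connected. -/
def CycleArrow (Q : QuivRel) (a : ℕ) : Prop :=
  a ∈ Q.A ∧ Connected (deleteArrows Q {a})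

/-- Branch relation: a relation one of whose arrows is a branch arrow. -/
def BranchRel (Q : QuivRel) (ρ : ℕ × ℕ) : Prop :=
  ρ ∈ Q.rel ∧ (BranchArrow Q ρ.1 ∨ BranchArrow Q ρ.2)

/-- A relation `ρ = (α, β)` is isolated if the antipath `(α, β)` is a maximal
antipath, i.e. `ρ ∈ 𝒩`. -/
def Isolated (Q : QuivRel) (st : SigmaTau Q) (ρ : ℕ × ℕ) : Prop :=
  ρ ∈ Q.rel ∧ InN Q st (.arrows [ρ.1, ρ.2])

/-- `Q'` is obtained from `Q` by completing the relations from `R₀`, the new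
arrow attached to `ρ ∈ R₀` being `γ ρ`. -/
structure IsCompletion (Q : QuivRel) (R0 : Finset (ℕ × ℕ)) (γ : ℕ × ℕ → ℕ)
    (Q' : QuivRel) : Prop where
  subset : R0 ⊆ Q.rel
  fresh : ∀ ρ ∈ R0, γ ρ ∉ Q.A
  inj : ∀ ρ ∈ R0, ∀ ρ' ∈ R0, γ ρ = γ ρ' → ρ = ρ'
  V_eq : Q'.V = Q.V
  A_eq : Q'.A = Q.A ∪ R0.image γ
  src_old : ∀ a ∈ Q.A, Q'.src a = Q.src a
  tgt_old : ∀ a ∈ Q.A, Q'.tgt a = Q.tgt a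
  src_new : ∀ ρ ∈ R0, Q'.src (γ ρ) = Q.tgt ρ.1
  tgt_new : ∀ ρ ∈ R0, Q'.tgt (γ ρ) = Q.src ρ.2
  rel_eq : Q'.rel = Q.rel ∪ R0.image (fun ρ => (γ ρ, ρ.1)) ∪
      R0.image (fun ρ => (ρ.2, γ ρ))

/-- A 3-cycle: three pairwise distinct arrows forming an oriented cycle. -/
def Is3Cycle (Q : QuivRel) (a0 a1 a2 : ℕ) : Prop :=
  a0 ∈ Q.A ∧ a1 ∈ Q.A ∧ a2 ∈ Q.A ∧ a0 ≠ a1 ∧ a1 ≠ a2 ∧ a0 ≠ a2 ∧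
  Q.src a0 = Q.tgt a1 ∧ Q.src a1 = Q.tgt a2 ∧ Q.src a2 = Q.tgt a0

/-- A triangle: a 3-cycle all of whose three compositions are relations. -/
def IsTriangleTriple (Q : QuivRel) (a0 a1 a2 : ℕ) : Prop :=
  Is3Cycle Q a0 a1 a2 ∧ (a0, a1) ∈ Q.rel ∧ (a1, a2) ∈ Q.rel ∧ (a2, a0) ∈ Q.rel

/-- The (unordered) set of arrows of a triangle. -/
def TriangleSet (Q : QuivRel) (O : Finset ℕ) : Prop :=
  ∃ a0 a1 a2, O = {a0, a1, a2} ∧ IsTriangleTriple Q a0 a1 a2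

/-- Branch triangle: removing any two of its arrows disconnects the quiver. -/
def BranchTriangle (Q : QuivRel) (O : Finset ℕ) : Prop :=
  TriangleSet Q O ∧ ∀ S ⊆ O, S.card = 2 → ¬ Connected (deleteArrows Q S)

/-- Free relation: a relation neither of whose arrows lies in `𝒞`. -/
def FreeRel (Q : QuivRel) (st : SigmaTau Q) (ρ : ℕ × ℕ) : Prop :=
  ρ ∈ Q.rel ∧ ¬ InC Q st ρ.1 ∧ ¬ InC Q st ρ.2

/-- The class `𝒜`: gentle quivers with `f_𝚫 = m·[0,3] + [p+m+2, p]`. -/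
def ClassA (Q : QuivRel) (st : SigmaTau Q) : Prop :=
  IsGentle Q ∧ ∃ m p : ℕ, ∀ x, fInv Q st x = m * charFn 0 3 x + charFn (p + m + 2) p x

/-- The class `Ã`: gentle quivers with
`f_𝚫 = (m₁+m₂)·[0,3] + [p+m₁, p] + [q+m₂, q]`, `p+m₁ > 0`, `q+m₂ > 0`. -/
def ClassAtilde (Q : QuivRel) (st : SigmaTau Q) : Prop :=
  IsGentle Q ∧ ∃ m1 m2 p q : ℕ, 0 < p + m1 ∧ 0 < q + m2 ∧
    ∀ x, fInv Q st x =
      (m1 + m2) * charFn 0 3 x + charFn (p + m1) p x + charFn (q + m2) q x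

/-- Isomorphism of quivers with relations. -/
def IsoQR (Q Q' : QuivRel) : Prop :=
  ∃ fV fA : ℕ → ℕ,
    Set.BijOn fV ↑Q.V ↑Q'.V ∧ Set.BijOn fA ↑Q.A ↑Q'.A ∧
    (∀ a ∈ Q.A, Q'.src (fA a) = fV (Q.src a) ∧ Q'.tgt (fA a) = fV (Q.tgt a)) ∧
    (∀ a ∈ Q.A, ∀ b ∈ Q.A, ((a, b) ∈ Q.rel ↔ (fA a, fA b) ∈ Q'.rel))

/-- The quiver has no loops. -/
def NoLoops (Q : QuivRel) : Prop := ∀ a ∈ Q.A, Q.src a ≠ Q.tgt a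

/-- The reflection at `x` is defined: every arrow starting at `x` admits a
(necessarily unique) companion arrow ending at `x` not bound by a relation. -/
def CanReflect (Q : QuivRel) (x : ℕ) : Prop :=
  x ∈ Q.V ∧ ∀ a ∈ Q.A, Q.src a = x → ∃ b ∈ Q.A, Q.tgt b = x ∧ (a, b) ∉ Q.rel

/-- `Q'` is the reflection of the gentle loop-free quiver `Q` at the vertex
`x`, following Brenner–Butler tilting. -/
def IsReflection (Q : QuivRel) (x : ℕ) (Q' : QuivRel) : Prop :=
  IsGentle Q ∧ NoLoops Q ∧ CanReflect Q x ∧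
  Q'.V = Q.V ∧ Q'.A = Q.A ∧
  (∀ a ∈ Q.A, Q.tgt a = x → Q'.src a = x ∧ Q'.tgt a = Q.src a) ∧
  (∀ a ∈ Q.A, Q.src a = x →
    ∀ b ∈ Q.A, Q.tgt b = x → (a, b) ∉ Q.rel → Q'.src a = Q.src b) ∧
  (∀ a ∈ Q.A, Q.tgt a ≠ x → Q.src a ≠ x → Q'.src a = Q.src a) ∧
  (∀ a ∈ Q.A, Q.tgt a ≠ x →
    ((∃ b ∈ Q.A, Q.tgt b = x ∧ Q.src b = Q.tgt a ∧ (b, a) ∈ Q.rel) → Q'.tgt a = x) ∧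
    ((¬ ∃ b ∈ Q.A, Q.tgt b = x ∧ Q.src b = Q.tgt a ∧ (b, a) ∈ Q.rel) →
      Q'.tgt a = Q.tgt a)) ∧
  (∀ a b : ℕ, (a, b) ∈ Q'.rel ↔
    (((a, b) ∈ Q.rel ∧ Q.tgt a ≠ x ∧ Q.src a ≠ x) ∨
     (a ∈ Q.A ∧ b ∈ Q.A ∧ Q.src a = x ∧ Q.tgt b = x ∧ (a, b) ∉ Q.rel) ∨
     (a ∈ Q.A ∧ b ∈ Q.A ∧ Q.tgt a = x ∧
       ∃ c ∈ Q.A, c ≠ a ∧ Q.tgt c = x ∧ Q.src c = Q.tgt b ∧ (c, b) ∈ Q.rel)))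

/-- The opposite quiver with relations. -/
def opQR (Q : QuivRel) : QuivRel where
  V := Q.V
  A := Q.A
  src := Q.tgt
  tgt := Q.src
  rel := Q.rel.image fun ρ => (ρ.2, ρ.1)

/-- Coreflection: the dual of reflection. -/
def IsCoreflection (Q : QuivRel) (x : ℕ) (Q' : QuivRel) : Prop :=
  IsReflection (opQR Q) x (opQR Q')

/-- One step of reflection equivalence: a reflection, a coreflection, or an
isomorphism of quivers with relations. -/
def RefStep (Q Q' : QuivRel) : Prop :=
  (∃ x, IsReflection Q x Q') ∨ (∃ x, IsCoreflection Q x Q') ∨ IsoQR Q Q'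

/-- Reflection equivalence: a finite sequence of reflections/coreflections,
up to isomorphism of quivers with relations. -/
def RefEquiv : QuivRel → QuivRel → Prop := Relation.ReflTransGen RefStep

/-- A cyclic orientation of a `1`-cycle quiver without branch arrows (i.e. a
cycle): enumerations of the vertices and arrows by `ZMod n` such that the
`i`-th arrow joins the `i`-th and `(i+1)`-st vertices. -/
structure CyclicOrientation (Q : QuivRel) (n : ℕ) where
  ev : ZMod n → ℕ
  ea : ZMod n → ℕ
  ev_mem : ∀ i, ev i ∈ Q.V
  ea_mem : ∀ i, ea i ∈ Q.A
  ev_inj : Function.Injective ev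
  ea_inj : Function.Injective ea
  ev_surj : ∀ v ∈ Q.V, ∃ i, ev i = v
  ea_surj : ∀ a ∈ Q.A, ∃ i, ea i = a
  compat : ∀ i : ZMod n,
    (Q.src (ea i) = ev i ∧ Q.tgt (ea i) = ev (i + 1)) ∨
    (Q.src (ea i) = ev (i + 1) ∧ Q.tgt (ea i) = ev i)

/-- Clockwise arrow with respect to a cyclic orientation. -/
def Clockwise (Q : QuivRel) {n : ℕ} (co : CyclicOrientation Q n) (a : ℕ) : Prop :=
  a ∈ Q.A ∧ ∃ i : ZMod n, co.ea i = a ∧ Q.src a = co.ev i ∧ Q.tgt a = co.ev (i + 1)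

/-- Anticlockwise arrow with respect to a cyclic orientation. -/
def Anticlockwise (Q : QuivRel) {n : ℕ} (co : CyclicOrientation Q n) (a : ℕ) : Prop :=
  a ∈ Q.A ∧ ∃ i : ZMod n, co.ea i = a ∧ Q.src a = co.ev (i + 1) ∧ Q.tgt a = co.ev i

end GentleQuiv

namespace GentleQuiv

/-- Walk in the state graph: the arrow `a` goes from `(src a, σ a)` to `(tgt a, δ * τ a)`. -/
def Wk (Q : QuivRel) (st : SigmaTau Q) (δ : ℤ) (S : ℕ × ℤ) : List ℕ → ℕ × ℤ → Prop
  | [], T => S = T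
  | a :: l, T => a ∈ Q.A ∧ T = (Q.tgt a, δ * st.τ a) ∧ Wk Q st δ S l (Q.src a, st.σ a)

def NoOut (Q : QuivRel) (st : SigmaTau Q) (T : ℕ × ℤ) : Prop :=
  ∀ a ∈ Q.A, (Q.src a, st.σ a) ≠ T

def NoIn (Q : QuivRel) (st : SigmaTau Q) (δ : ℤ) (S : ℕ × ℤ) : Prop :=
  ∀ b ∈ Q.A, (Q.tgt b, δ * st.τ b) ≠ S

theorem wk_append {Q : QuivRel} {st : SigmaTau Q} {δ : ℤ} {S : ℕ × ℤ} (l1 l2 : List ℕ)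
    (T : ℕ × ℤ) : Wk Q st δ S (l1 ++ l2) T ↔ ∃ U, Wk Q st δ S l2 U ∧ Wk Q st δ U l1 T := by
  induction l1 generalizing T with
  | nil => simp [Wk]
  | cons a l ih =>
    simp only [List.cons_append, Wk, ih]
    constructor
    · rintro ⟨h1, h2, U, h3, h4⟩; exact ⟨U, h3, h1, h2, h4⟩
    · rintro ⟨U, h3, h1, h2, h4⟩; exact ⟨h1, h2, U, h3, h4⟩

theorem wk_mem {Q : QuivRel} {st : SigmaTau Q} {δ : ℤ} {S T : ℕ × ℤ} {l : List ℕ}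
    (h : Wk Q st δ S l T) : ∀ a ∈ l, a ∈ Q.A := by
  induction l generalizing T with
  | nil => simp
  | cons a l ih =>
    obtain ⟨h1, h2, h3⟩ := h
    intro b hb
    rcases List.mem_cons.1 hb with rfl | hb
    · exact h1
    · exact ih h3 b hb

theorem out_inj {Q : QuivRel} (st : SigmaTau Q) {a b : ℕ} (ha : a ∈ Q.A) (hb : b ∈ Q.A)
    (h1 : Q.src a = Q.src b) (h2 : st.σ a = st.σ b) : a = b := by
  by_contra hne
  have := st.σ_src a ha b hb hne h1
  have := st.σ_pm a ha
  omega

theorem in_inj {Q : QuivRel} (st : SigmaTau Q) {a b : ℕ} (ha : a ∈ Q.A) (hb : b ∈ Q.A)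
    (h1 : Q.tgt a = Q.tgt b) (h2 : st.τ a = st.τ b) : a = b := by
  by_contra hne
  have := st.τ_tgt a ha b hb hne h1
  have := st.τ_pm a ha
  omega

theorem back_unique {Q : QuivRel} {st : SigmaTau Q} {δ : ℤ} (hδ : δ ≠ 0) {S S' T : ℕ × ℤ}
    {l l' : List ℕ} (h : Wk Q st δ S l T) (h' : Wk Q st δ S' l' T)
    (hS : NoIn Q st δ S) (hS' : NoIn Q st δ S') : l = l' ∧ S = S' := by
  induction l generalizing T l' with
  | nil =>
    cases l' with
    | nil => simp only [Wk] at h h'; exact ⟨rfl, h.trans h'.symm⟩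
    | cons b l' =>
      obtain ⟨h1, h2, _⟩ := h'
      simp only [Wk] at h
      exact absurd (h.trans h2).symm (hS b h1)
  | cons a l ih =>
    obtain ⟨a1, a2, a3⟩ := h
    cases l' with
    | nil =>
      simp only [Wk] at h'
      exact absurd (h'.trans a2).symm (hS' a a1)
    | cons b l' =>
      obtain ⟨b1, b2, b3⟩ := h'
      have e := a2.symm.trans b2
      rw [Prod.mk.injEq] at e
      have := in_inj st a1 b1 e.1 (mul_left_cancel₀ hδ e.2)
      subst this
      obtain ⟨e1, e2⟩ := ih a3 b3
      exact ⟨by simp [e1], e2⟩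

theorem fwd_unique {Q : QuivRel} {st : SigmaTau Q} {δ : ℤ} {S T T' : ℕ × ℤ}
    {l l' : List ℕ} (h : Wk Q st δ S l T) (h' : Wk Q st δ S l' T')
    (hT : NoOut Q st T) (hT' : NoOut Q st T') : l = l' ∧ T = T' := by
  induction l using List.reverseRecOn generalizing S l' with
  | nil =>
    simp only [Wk] at h
    rcases List.eq_nil_or_concat l' with rfl | ⟨k, b, rfl⟩
    · simp only [Wk] at h'; exact ⟨rfl, h.symm.trans h'⟩
    · simp only [List.concat_eq_append, wk_append, Wk] at h'
      obtain ⟨U, ⟨b1, b2, b3⟩, b4⟩ := h'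
      exact absurd (b3.symm.trans h) (hT b b1)
  | append_singleton l a ih =>
    simp only [List.concat_eq_append, wk_append, Wk] at h
    obtain ⟨U, ⟨a1, a2, a3⟩, a4⟩ := h
    rcases List.eq_nil_or_concat l' with rfl | ⟨k, b, rfl⟩
    · simp only [Wk] at h'
      exact absurd (a3.symm.trans h') (hT' a a1)
    · simp only [List.concat_eq_append, wk_append, Wk] at h'
      obtain ⟨U', ⟨b1, b2, b3⟩, b4⟩ := h'
      have e := a3.symm.trans b3
      rw [Prod.mk.injEq] at e
      have := out_inj st a1 b1 e.1 e.2
      subst this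
      subst a2 b2
      obtain ⟨e1, e2⟩ := ih a4 b4
      exact ⟨by simp [e1], e2⟩

/-! Bridge between threads and walks. -/

def arr : Thread → List ℕ
  | .triv _ _ => []
  | .arrows l => l

def mkT (S : ℕ × ℤ) : List ℕ → Thread
  | [] => .triv S.1 S.2
  | a :: l => .arrows (a :: l)

def stt (Q : QuivRel) (st : SigmaTau Q) (w : Thread) : ℕ × ℤ := (w.source Q, w.sigma st)
def en (Q : QuivRel) (st : SigmaTau Q) (w : Thread) : ℕ × ℤ := (w.target Q, w.tauAnti st)
def enP (Q : QuivRel) (st : SigmaTau Q) (w : Thread) : ℕ × ℤ := (w.target Q, -w.tauPath st)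

def Nice (Q : QuivRel) : Prop :=
  (∀ a ∈ Q.A, Q.src a ∈ Q.V ∧ Q.tgt a ∈ Q.V) ∧
  (∀ a b, (a, b) ∈ Q.rel → a ∈ Q.A ∧ b ∈ Q.A ∧ Q.src a = Q.tgt b)

def Good (Q : QuivRel) (S : ℕ × ℤ) : Prop := S.1 ∈ Q.V ∧ (S.2 = 1 ∨ S.2 = -1)

theorem arr_mkT (S : ℕ × ℤ) (l : List ℕ) : arr (mkT S l) = l := by
  cases l <;> rfl

theorem wk_start {Q : QuivRel} {st : SigmaTau Q} {δ : ℤ} {S T : ℕ × ℤ} {l : List ℕ}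
    (h : Wk Q st δ S l T) : stt Q st (mkT S l) = S := by
  rcases List.eq_nil_or_concat l with rfl | ⟨k, b, rfl⟩
  · rfl
  · simp only [List.concat_eq_append, wk_append, Wk] at h
    obtain ⟨U, ⟨_, _, h3⟩, _⟩ := h
    have : mkT S (k ++ [b]) = .arrows (k ++ [b]) := by cases k <;> rfl
    rw [List.concat_eq_append, this, h3]
    simp [stt, Thread.source, Thread.sigma, List.getLast!_eq_getLast?_getD]

theorem wk_en {Q : QuivRel} {st : SigmaTau Q} {S T : ℕ × ℤ} {l : List ℕ}
    (h : Wk Q st 1 S l T) : en Q st (mkT S l) = T := by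
  cases l with
  | nil => exact h
  | cons a l => simp only [Wk, one_mul] at h; rw [h.2.1]; rfl

theorem wk_enP {Q : QuivRel} {st : SigmaTau Q} {S T : ℕ × ℤ} {l : List ℕ}
    (h : Wk Q st (-1) S l T) : enP Q st (mkT S l) = T := by
  cases l with
  | nil => simp only [Wk] at h; rw [← h]; simp [enP, mkT, Thread.target, Thread.tauPath]
  | cons a l =>
    simp only [Wk] at h; rw [h.2.1]; simp [enP, mkT, Thread.target, Thread.tauPath]

theorem anti_wk_aux {Q : QuivRel} {st : SigmaTau Q} (hN : Nice Q) (l : List ℕ) (a : ℕ) :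
    IsAntiList Q (a :: l) ↔ ∃ S, Wk Q st 1 S (a :: l) (Q.tgt a, st.τ a) := by
  induction l generalizing a with
  | nil => simp [IsAntiList, List.Chain', Wk]
  | cons b l ih =>
    have ihb := ih b
    simp only [IsAntiList, List.Chain', Wk, one_mul, List.isChain_cons_cons, List.mem_cons, forall_eq_or_imp,
      ne_eq, reduceCtorEq, not_false_eq_true, true_and, Prod.mk.injEq] at ihb ⊢
    constructor
    · rintro ⟨⟨h1, h2, h3⟩, h4, h5⟩
      obtain ⟨S, s1, s2⟩ := ihb.1 ⟨⟨h2, h3⟩, h5⟩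
      obtain ⟨r1, r2, r3⟩ := hN.2 _ _ h4
      exact ⟨S, h1, h2, ⟨r3, (st.rel_iff a h1 b h2 r3).1 h4⟩, s2⟩
    · rintro ⟨S, h1, h2, ⟨r3, r4⟩, s2⟩
      obtain ⟨⟨_, q1⟩, q2⟩ := ihb.2 ⟨S, h2, s2⟩
      exact ⟨⟨h1, h2, q1⟩, (st.rel_iff a h1 b h2 r3).2 r4, q2⟩

theorem path_wk_aux {Q : QuivRel} {st : SigmaTau Q} (l : List ℕ) (a : ℕ) :
    IsPermList Q (a :: l) ↔ ∃ S, Wk Q st (-1) S (a :: l) (Q.tgt a, -st.τ a) := by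
  induction l generalizing a with
  | nil => simp [IsPermList, IsPathList, List.Chain', Wk]
  | cons b l ih =>
    have ihb := ih b
    simp only [IsPermList, IsPathList, List.Chain', Wk, neg_mul, one_mul, List.isChain_cons_cons, List.mem_cons,
      forall_eq_or_imp,
      ne_eq, reduceCtorEq, not_false_eq_true, true_and, Prod.mk.injEq] at ihb ⊢
    have key : ∀ h1 : a ∈ Q.A, ∀ h2 : b ∈ Q.A, Q.src a = Q.tgt b →
        ((a, b) ∉ Q.rel ↔ st.σ a = -st.τ b) := by
      intro h1 h2 h3
      rw [st.rel_iff a h1 b h2 h3]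
      have := st.σ_pm a h1
      have := st.τ_pm b h2
      omega
    constructor
    · rintro ⟨⟨⟨h1, h2, h3⟩, h4, h5⟩, h6, h7⟩
      obtain ⟨S, s1, s2⟩ := ihb.1 ⟨⟨⟨h2, h3⟩, h5⟩, h7⟩
      exact ⟨S, h1, h2, ⟨h4, (key h1 h2 h4).1 h6⟩, s2⟩
    · rintro ⟨S, h1, h2, ⟨r3, r4⟩, s2⟩
      obtain ⟨⟨⟨_, q1⟩, q3⟩, q2⟩ := ihb.2 ⟨S, h2, s2⟩
      exact ⟨⟨⟨h1, h2, q1⟩, r3, q3⟩, (key h1 h2 r3).2 r4, q2⟩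

theorem anti_wk {Q : QuivRel} (st : SigmaTau Q) (hN : Nice Q) {w : Thread}
    (h : IsAntiThread Q w) :
    Wk Q st 1 (stt Q st w) (arr w) (en Q st w) ∧ mkT (stt Q st w) (arr w) = w := by
  cases w with
  | triv x ε => exact ⟨rfl, rfl⟩
  | arrows l =>
    cases l with
    | nil => exact absurd rfl h.1
    | cons a l =>
      obtain ⟨S, hS⟩ := (anti_wk_aux (st := st) hN l a).1 h
      have e := wk_start hS
      have e2 := wk_en hS
      simp only [mkT] at e e2
      refine ⟨?_, rfl⟩
      rw [e, e2]; exact hS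

theorem path_wk {Q : QuivRel} (st : SigmaTau Q) {w : Thread}
    (h : IsPathThread Q w) :
    Wk Q st (-1) (stt Q st w) (arr w) (enP Q st w) ∧ mkT (stt Q st w) (arr w) = w := by
  cases w with
  | triv x ε => exact ⟨by simp [Wk, stt, enP, arr, Thread.source, Thread.target, Thread.sigma,
                  Thread.tauPath], rfl⟩
  | arrows l =>
    cases l with
    | nil => exact absurd rfl h.1.1
    | cons a l =>
      obtain ⟨S, hS⟩ := (path_wk_aux (st := st) l a).1 h
      have e := wk_start hS
      have e2 := wk_enP hS
      simp only [mkT] at e e2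
      refine ⟨?_, rfl⟩
      rw [e, e2]; exact hS

theorem wk_anti {Q : QuivRel} {st : SigmaTau Q} (hN : Nice Q) {S T : ℕ × ℤ} {l : List ℕ}
    (hS : Good Q S) (h : Wk Q st 1 S l T) : IsAntiThread Q (mkT S l) := by
  cases l with
  | nil => exact hS
  | cons a l =>
    refine (anti_wk_aux (st := st) hN l a).2 ⟨S, ?_⟩
    have := h.2.1
    rw [one_mul] at this
    rw [← this]; exact h

theorem wk_path {Q : QuivRel} {st : SigmaTau Q} {S T : ℕ × ℤ} {l : List ℕ}
    (hS : Good Q S) (h : Wk Q st (-1) S l T) : IsPathThread Q (mkT S l) := by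
  cases l with
  | nil => exact hS
  | cons a l =>
    refine (path_wk_aux (st := st) l a).2 ⟨S, ?_⟩
    have := h.2.1
    rw [neg_mul, one_mul] at this
    rw [← this]; exact h

theorem good_stt {Q : QuivRel} {st : SigmaTau Q} (hN : Nice Q) {w : Thread}
    (h : IsAntiThread Q w) : Good Q (stt Q st w) := by
  obtain ⟨h1, h2⟩ := anti_wk st hN h
  rcases List.eq_nil_or_concat (arr w) with e | ⟨k, b, e⟩
  · rw [e] at h2
    rw [← h2] at h
    exact h
  · rw [e] at h1
    simp only [List.concat_eq_append, wk_append, Wk] at h1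
    obtain ⟨U, ⟨b1, b2, b3⟩, b4⟩ := h1
    rw [b3]
    exact ⟨(hN.1 b b1).1, st.σ_pm b b1⟩

theorem inN_iff {Q : QuivRel} {st : SigmaTau Q} {w : Thread} :
    InN Q st w ↔ IsAntiThread Q w ∧ NoOut Q st (en Q st w) ∧ NoIn Q st 1 (stt Q st w) := by
  simp [InN, NoOut, NoIn, en, stt]

theorem inM_iff {Q : QuivRel} {st : SigmaTau Q} {w : Thread} :
    InM Q st w ↔ IsPathThread Q w ∧ NoOut Q st (enP Q st w) ∧ NoIn Q st (-1) (stt Q st w) := by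
  simp [InM, NoOut, NoIn, enP, stt, neg_eq_iff_eq_neg]

def ng (S : ℕ × ℤ) : ℕ × ℤ := (S.1, -S.2)

theorem ng_inj {S S' : ℕ × ℤ} (h : ng S = ng S') : S = S' := by
  simp only [ng, Prod.mk.injEq, neg_inj] at h
  exact Prod.ext h.1 h.2

/-- Maximal walk. -/
def MW (Q : QuivRel) (st : SigmaTau Q) (δ : ℤ) (S : ℕ × ℤ) (l : List ℕ) (T : ℕ × ℤ) : Prop :=
  Wk Q st δ S l T ∧ NoOut Q st T ∧ NoIn Q st δ S

theorem inN_mw {Q : QuivRel} {st : SigmaTau Q} (hN : Nice Q) {w : Thread} (h : InN Q st w) :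
    MW Q st 1 (stt Q st w) (arr w) (en Q st w) := by
  rw [inN_iff] at h
  exact ⟨(anti_wk st hN h.1).1, h.2⟩

theorem phi_iff {Q : QuivRel} {st : SigmaTau Q} (hN : Nice Q) {w w' : Thread} :
    PhiRel Q st w w' ↔ InN Q st w ∧ InN Q st w' ∧
      ∃ l, MW Q st (-1) (ng (stt Q st w)) l (en Q st w') := by
  constructor
  · rintro ⟨h1, h2, m, hm, a1, a2, a3, a4⟩
    refine ⟨h1, h2, arr m, ?_⟩
    rw [inM_iff] at hm
    have e1 : ng (stt Q st w) = stt Q st m := by simp [ng, stt, a1, a2]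
    have e2 : en Q st w' = enP Q st m := by simp [en, enP, a3, a4]
    rw [e1, e2]
    exact ⟨(path_wk st hm.1).1, hm.2⟩
  · rintro ⟨h1, h2, l, h3, h4, h5⟩
    have g := good_stt (st := st) hN h1.1
    have g' : Good Q (ng (stt Q st w)) := by
      refine ⟨g.1, ?_⟩
      have := g.2
      simp only [ng]; omega
    have e1 := wk_start h3
    have e2 := wk_enP h3
    refine ⟨h1, h2, mkT (ng (stt Q st w)) l, ?_, ?_⟩
    · rw [inM_iff, e1, e2]
      exact ⟨wk_path g' h3, h4, h5⟩
    · simp only [stt, enP, en, ng, Prod.mk.injEq] at e1 e2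
      refine ⟨e1.1, e1.2, e2.1.symm, e2.2.symm⟩

theorem N_eq_of_stt {Q : QuivRel} {st : SigmaTau Q} (hN : Nice Q) {w w' : Thread}
    (h : InN Q st w) (h' : InN Q st w') (e : stt Q st w = stt Q st w') : w = w' := by
  have m := inN_mw hN h
  have m' := inN_mw hN h'
  rw [e] at m
  have := (fwd_unique m.1 m'.1 m.2.1 m'.2.1).1
  rw [← (anti_wk st hN h.1).2, ← (anti_wk st hN h'.1).2, e, this]

theorem N_eq_of_en {Q : QuivRel} {st : SigmaTau Q} (hN : Nice Q) {w w' : Thread}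
    (h : InN Q st w) (h' : InN Q st w') (e : en Q st w = en Q st w') : w = w' := by
  have m := inN_mw hN h
  have m' := inN_mw hN h'
  rw [e] at m
  have := (back_unique one_ne_zero m.1 m'.1 m.2.2 m'.2.2)
  rw [← (anti_wk st hN h.1).2, ← (anti_wk st hN h'.1).2, this.1, this.2]

/-- Maximal antipaths sharing an arrow coincide. -/
theorem N_eq_of_mem {Q : QuivRel} {st : SigmaTau Q} (hN : Nice Q) {w w' : Thread}
    (h : InN Q st w) (h' : InN Q st w') {a : ℕ} (ha : a ∈ arr w) (ha' : a ∈ arr w') :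
    w = w' := by
  have m := inN_mw hN h
  have m' := inN_mw hN h'
  obtain ⟨l1, l0, e⟩ := List.append_of_mem ha
  obtain ⟨k1, k0, e'⟩ := List.append_of_mem ha'
  apply N_eq_of_stt hN h h'
  have m1 := m.1
  have m1' := m'.1
  rw [e, wk_append] at m1
  rw [e', wk_append] at m1'
  obtain ⟨U, ⟨_, _, c⟩, _⟩ := m1
  obtain ⟨U', ⟨_, _, c'⟩, _⟩ := m1'
  exact (back_unique one_ne_zero c c' m.2.2 m'.2.2).2

theorem phi_fun {Q : QuivRel} {st : SigmaTau Q} (hN : Nice Q) {w u v : Thread}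
    (h : PhiRel Q st w u) (h' : PhiRel Q st w v) : u = v := by
  rw [phi_iff hN] at h h'
  obtain ⟨h1, h2, l, h3⟩ := h
  obtain ⟨h1', h2', l', h3'⟩ := h'
  exact N_eq_of_en hN h2 h2' (fwd_unique h3.1 h3'.1 h3.2.1 h3'.2.1).2

theorem phi_inj {Q : QuivRel} {st : SigmaTau Q} (hN : Nice Q) {w u v : Thread}
    (h : PhiRel Q st u w) (h' : PhiRel Q st v w) : u = v := by
  rw [phi_iff hN] at h h'
  obtain ⟨h1, h2, l, h3⟩ := h
  obtain ⟨h1', h2', l', h3'⟩ := h'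
  exact N_eq_of_stt hN h1 h1'
    (ng_inj (back_unique (by norm_num) h3.1 h3'.1 h3.2.2 h3'.2.2).2)

section RelLemmas

/-! Relation-theoretic lemma: removing a point from a partial permutation. -/

theorem eqvGen_fix {X : Type*} {r : X → X → Prop} (S : Set X)
    (h : ∀ x y, r x y → (x ∈ S ↔ y ∈ S)) {x y : X} (e : Relation.EqvGen r x y) :
    x ∈ S ↔ y ∈ S := by
  induction e with
  | rel x y hxy => exact h x y hxy
  | refl x => rfl
  | symm x y _ ih => exact ih.symm
  | trans x y z _ _ ih1 ih2 => exact ih1.trans ih2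

theorem eqvGen_lift {X Y : Type*} {r : X → X → Prop} {s : Y → Y → Prop} (f : X → Y)
    (h : ∀ x y, r x y → Relation.EqvGen s (f x) (f y)) {x y : X}
    (e : Relation.EqvGen r x y) : Relation.EqvGen s (f x) (f y) := by
  induction e with
  | rel x y hxy => exact h x y hxy
  | refl x => exact .refl _
  | symm x y _ ih => exact ih.symm
  | trans x y z _ _ ih1 ih2 => exact ih1.trans _ _ _ ih2

theorem eqvGen_remove {X : Type*} {r r' : X → X → Prop} {p : X}
    (hf : ∀ w u v, r w u → r w v → u = v) (hi : ∀ w u v, r u w → r v w → u = v)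
    (hp : ¬ r p p)
    (hr : ∀ x y, r' x y ↔ x ≠ p ∧ y ≠ p ∧ (r x y ∨ r x p ∧ r p y)) {x y : X} (hx : x ≠ p) :
    Relation.EqvGen r' x y ↔ Relation.EqvGen r x y ∧ y ≠ p := by
  classical
  constructor
  · intro e
    refine ⟨?_, ?_⟩
    · refine eqvGen_lift id ?_ e
      intro x y h
      rcases ((hr x y).1 h).2.2 with h | ⟨h1, h2⟩
      · exact .rel _ _ h
      · exact .trans _ _ _ (.rel _ _ h1) (.rel _ _ h2)
    · have := eqvGen_fix {z | z ≠ p} (fun x y h => by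
        have := (hr x y).1 h
        simp [this.1, this.2.1]) e
      exact this.1 hx
  · rintro ⟨e, hy⟩
    obtain ⟨q, hq⟩ : ∃ q, (∀ u, r u p → q = u) ∧ (∀ v, r p v → q = v ∨ r q p) := by
      by_cases h1 : ∃ u, r u p
      · obtain ⟨u, hu⟩ := h1
        exact ⟨u, fun u' hu' => hi _ _ _ hu hu', fun v hv => .inr hu⟩
      · by_cases h2 : ∃ v, r p v
        · obtain ⟨v, hv⟩ := h2
          exact ⟨v, fun u hu => absurd ⟨u, hu⟩ h1, fun v' hv' => .inl (hf _ _ _ hv hv')⟩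
        · exact ⟨p, fun u hu => absurd ⟨u, hu⟩ h1, fun v hv => absurd ⟨v, hv⟩ h2⟩
    have := eqvGen_lift (s := r') (fun z => if z = p then q else z) (fun x y h => by
      by_cases h1 : x = p
      · subst h1
        have hy : y ≠ x := by rintro rfl; exact hp h
        simp only [if_true, if_neg hy]
        rcases hq.2 y h with rfl | h'
        · exact .refl _
        · refine .rel _ _ ((hr _ _).2 ⟨?_, hy, .inr ⟨h', h⟩⟩)
          rintro rfl; exact hp h'
      · by_cases h2 : y = p
        · subst h2
          simp only [if_true, if_neg h1]
          rw [hq.1 x h]; exact .refl _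
        · simp only [if_neg h1, if_neg h2]
          exact .rel _ _ ((hr _ _).2 ⟨h1, h2, .inl h⟩)) e
    simpa [hx, hy] using this

end RelLemmas

/-! Adding one arrow. -/

structure Ext (Q Q' : QuivRel) (st : SigmaTau Q) (st' : SigmaTau Q') (g : ℕ) : Prop where
  fresh : g ∉ Q.A
  V_eq : Q'.V = Q.V
  mem : ∀ a, a ∈ Q'.A ↔ a ∈ Q.A ∨ a = g
  src : ∀ a ∈ Q.A, Q'.src a = Q.src a
  tgt : ∀ a ∈ Q.A, Q'.tgt a = Q.tgt a
  σ : ∀ a ∈ Q.A, st'.σ a = st.σ a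
  τ : ∀ a ∈ Q.A, st'.τ a = st.τ a

section Extension

variable {Q Q' : QuivRel} {st : SigmaTau Q} {st' : SigmaTau Q'} {g : ℕ}

theorem Ext.wk_up (E : Ext Q Q' st st' g) {δ : ℤ} {S T : ℕ × ℤ} {l : List ℕ}
    (h : Wk Q st δ S l T) : Wk Q' st' δ S l T := by
  induction l generalizing T with
  | nil => exact h
  | cons a l ih =>
    obtain ⟨h1, h2, h3⟩ := h
    refine ⟨(E.mem a).2 (.inl h1), ?_, ?_⟩
    · rw [E.tgt a h1, E.τ a h1]; exact h2
    · rw [E.src a h1, E.σ a h1]; exact ih h3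

theorem Ext.wk_down (E : Ext Q Q' st st' g) {δ : ℤ} {S T : ℕ × ℤ} {l : List ℕ}
    (hg : g ∉ l) (h : Wk Q' st' δ S l T) : Wk Q st δ S l T := by
  induction l generalizing T with
  | nil => exact h
  | cons a l ih =>
    obtain ⟨h1, h2, h3⟩ := h
    simp only [List.mem_cons, not_or] at hg
    have h1 : a ∈ Q.A := ((E.mem a).1 h1).resolve_right (Ne.symm hg.1)
    refine ⟨h1, ?_, ?_⟩
    · rw [← E.tgt a h1, ← E.τ a h1]; exact h2
    · rw [← E.src a h1, ← E.σ a h1]; exact ih hg.2 h3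

theorem Ext.noOut_iff (E : Ext Q Q' st st' g) {T : ℕ × ℤ} :
    NoOut Q' st' T ↔ NoOut Q st T ∧ (Q'.src g, st'.σ g) ≠ T := by
  constructor
  · intro h
    refine ⟨fun a ha => ?_, h g ((E.mem g).2 (.inr rfl))⟩
    have := h a ((E.mem a).2 (.inl ha))
    rwa [E.src a ha, E.σ a ha] at this
  · rintro ⟨h, hg⟩ a ha
    rcases (E.mem a).1 ha with ha | rfl
    · rw [E.src a ha, E.σ a ha]; exact h a ha
    · exact hg

theorem Ext.noIn_iff (E : Ext Q Q' st st' g) {δ : ℤ} {T : ℕ × ℤ} :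
    NoIn Q' st' δ T ↔ NoIn Q st δ T ∧ (Q'.tgt g, δ * st'.τ g) ≠ T := by
  constructor
  · intro h
    refine ⟨fun a ha => ?_, h g ((E.mem g).2 (.inr rfl))⟩
    have := h a ((E.mem a).2 (.inl ha))
    rwa [E.tgt a ha, E.τ a ha] at this
  · rintro ⟨h, hg⟩ a ha
    rcases (E.mem a).1 ha with ha | rfl
    · rw [E.tgt a ha, E.τ a ha]; exact h a ha
    · exact hg

/-- Split a walk of `Q'` at its first use of `g`. -/
theorem Ext.wk_split (E : Ext Q Q' st st' g) {δ : ℤ} {S T : ℕ × ℤ} {l : List ℕ}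
    (hg : g ∈ l) (h : Wk Q' st' δ S l T) :
    ∃ l1 l0, l = l1 ++ g :: l0 ∧ Wk Q st δ S l0 (Q'.src g, st'.σ g) ∧
      Wk Q' st' δ (Q'.tgt g, δ * st'.τ g) l1 T := by
  have : ∃ l1 l0, l = l1 ++ g :: l0 ∧ g ∉ l0 := by
    clear h
    induction l with
    | nil => simp at hg
    | cons a l ih =>
      by_cases h : g ∈ l
      · obtain ⟨l1, l0, e, h0⟩ := ih h
        exact ⟨a :: l1, l0, by simp [e], h0⟩
      · have : g = a := by simpa [h] using hg
        subst this
        exact ⟨[], l, rfl, h⟩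
  obtain ⟨l1, l0, e, h0⟩ := this
  refine ⟨l1, l0, e, ?_⟩
  rw [e, wk_append] at h
  obtain ⟨U, ⟨_, h2, h3⟩, h4⟩ := h
  subst h2
  exact ⟨E.wk_down h0 h3, h4⟩

/-- `r` is the maximal antipath closed up by `g`. -/
theorem Ext.inN (E : Ext Q Q' st st' g) (hN : Nice Q) (hN' : Nice Q') {r : Thread}
    (hr : InN Q st r) (h1 : (Q'.src g, st'.σ g) = en Q st r)
    (h2 : (Q'.tgt g, st'.τ g) = stt Q st r) (w : Thread) :
    (InN Q' st' w ↔ InN Q st w ∧ w ≠ r) ∧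
    (InN Q' st' w → stt Q' st' w = stt Q st w ∧ en Q' st' w = en Q st w) := by
  have mr := inN_mw hN hr
  have down : InN Q' st' w → (InN Q st w ∧ w ≠ r) ∧
      stt Q' st' w = stt Q st w ∧ en Q' st' w = en Q st w := by
    intro h
    have m := inN_mw hN' h
    have e := (anti_wk st' hN' h.1).2
    have o := E.noOut_iff.1 m.2.1
    have i := E.noIn_iff.1 m.2.2
    have hg : g ∉ arr w := by
      intro hg
      obtain ⟨l1, l0, _, h3, _⟩ := E.wk_split hg m.1
      rw [h1] at h3
      have := (back_unique one_ne_zero h3 mr.1 i.1 mr.2.2).2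
      apply i.2
      rw [this, one_mul, h2]
    have k := E.wk_down hg m.1
    have s1 := wk_start k
    have s2 := wk_en k
    rw [e] at s1 s2
    refine ⟨⟨?_, ?_⟩, s1.symm, s2.symm⟩
    · rw [inN_iff, s1, s2]
      refine ⟨?_, o.1, i.1⟩
      have g := good_stt (st := st') hN' h.1
      have := wk_anti hN (S := stt Q' st' w) ⟨E.V_eq ▸ g.1, g.2⟩ k
      rwa [e] at this
    · rintro rfl
      apply o.2
      rw [h1, s2]
  refine ⟨⟨fun h => (down h).1, ?_⟩, fun h => (down h).2⟩
  rintro ⟨h, hne⟩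
  have m := inN_mw hN h
  have e := (anti_wk st hN h.1).2
  have k := E.wk_up m.1
  have s1 := wk_start k
  have s2 := wk_en k
  rw [e] at s1 s2
  rw [inN_iff, s1, s2]
  refine ⟨?_, E.noOut_iff.2 ⟨m.2.1, ?_⟩, E.noIn_iff.2 ⟨m.2.2, ?_⟩⟩
  · have g := good_stt (st := st) hN h.1
    have := wk_anti hN' (S := stt Q st w) ⟨E.V_eq ▸ g.1, g.2⟩ k
    rwa [e] at this
  · rw [h1]
    intro h'
    exact hne (N_eq_of_en hN hr h h').symm
  · rw [one_mul, h2]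
    intro h'
    exact hne (N_eq_of_stt hN hr h h').symm

theorem Ext.phi (E : Ext Q Q' st st' g) (hN : Nice Q) (hN' : Nice Q') {r : Thread}
    (hr : InN Q st r) (h1 : (Q'.src g, st'.σ g) = en Q st r)
    (h2 : (Q'.tgt g, st'.τ g) = stt Q st r)
    (hrr : ¬ PhiRel Q st r r) (w w' : Thread) :
    PhiRel Q' st' w w' ↔ w ≠ r ∧ w' ≠ r ∧
      (PhiRel Q st w w' ∨ PhiRel Q st w r ∧ PhiRel Q st r w') := by
  have mr := inN_mw hN hr
  have h2' : (Q'.tgt g, -1 * st'.τ g) = ng (stt Q st r) := by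
    rw [← h2]; simp [ng]
  have nR : NoIn Q st (-1) (ng (stt Q st r)) := by
    intro b hb hb'
    refine mr.2.2 b hb (ng_inj ?_)
    rw [← hb']; simp [ng]
  have hg : g ∈ Q'.A := (E.mem g).2 (.inr rfl)
  constructor
  · intro h
    rw [phi_iff hN'] at h
    obtain ⟨hw, hw', l, hl⟩ := h
    obtain ⟨i1, i2⟩ := E.inN hN hN' hr h1 h2 w
    obtain ⟨j1, j2⟩ := E.inN hN hN' hr h1 h2 w'
    rw [(i2 hw).1, (j2 hw').2] at hl
    obtain ⟨iN, iR⟩ := i1.1 hw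
    obtain ⟨jN, jR⟩ := j1.1 hw'
    refine ⟨iR, jR, ?_⟩
    have o := E.noOut_iff.1 hl.2.1
    have i := E.noIn_iff.1 hl.2.2
    by_cases hgl : g ∈ l
    · right
      obtain ⟨l1, l0, _, k0, k1⟩ := E.wk_split hgl hl.1
      rw [h1] at k0
      rw [h2'] at k1
      refine ⟨(phi_iff hN).2 ⟨iN, hr, l0, k0, mr.2.1, i.1⟩, ?_⟩
      by_cases hg1 : g ∈ l1
      · exfalso
        obtain ⟨l3, l2, _, k2, _⟩ := E.wk_split hg1 k1
        rw [h1] at k2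
        exact hrr ((phi_iff hN).2 ⟨hr, hr, l2, k2, mr.2.1, nR⟩)
      · exact (phi_iff hN).2 ⟨hr, jN, l1, E.wk_down hg1 k1, o.1, nR⟩
    · left
      exact (phi_iff hN).2 ⟨iN, jN, l, E.wk_down hgl hl.1, o.1, i.1⟩
  · rintro ⟨hw, hw', h⟩
    have hNw : InN Q st w := by
      rcases h with h | h
      · exact h.1
      · exact h.1.1
    have hNw' : InN Q st w' := by
      rcases h with h | h
      · exact h.2.1
      · exact h.2.2.1
    obtain ⟨i1, i2⟩ := E.inN hN hN' hr h1 h2 w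
    obtain ⟨j1, j2⟩ := E.inN hN hN' hr h1 h2 w'
    have a := i1.2 ⟨hNw, hw⟩
    have b := j1.2 ⟨hNw', hw'⟩
    rw [phi_iff hN', (i2 a).1, (j2 b).2]
    refine ⟨a, b, ?_⟩
    have oP : (Q'.src g, st'.σ g) ≠ en Q st w' := by
      rw [h1]; exact fun e => hw' (N_eq_of_en hN hr hNw' e).symm
    have iP : (Q'.tgt g, -1 * st'.τ g) ≠ ng (stt Q st w) := by
      rw [h2']; exact fun e => hw (N_eq_of_stt hN hr hNw (ng_inj e)).symm
    rcases h with h | ⟨h, h'⟩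
    · rw [phi_iff hN] at h
      obtain ⟨_, _, l, k1, k2, k3⟩ := h
      exact ⟨l, E.wk_up k1, E.noOut_iff.2 ⟨k2, oP⟩, E.noIn_iff.2 ⟨k3, iP⟩⟩
    · rw [phi_iff hN] at h h'
      obtain ⟨_, _, l0, k1, k2, k3⟩ := h
      obtain ⟨_, _, l1, m1, m2, m3⟩ := h'
      refine ⟨l1 ++ g :: l0, ?_, E.noOut_iff.2 ⟨m2, oP⟩, E.noIn_iff.2 ⟨k3, iP⟩⟩
      rw [wk_append]
      refine ⟨ng (stt Q st r), ⟨hg, h2'.symm, ?_⟩, E.wk_up m1⟩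
      rw [h1]; exact E.wk_up k1

end Extension

/-- Completing an isolated relation `ρ = (α, β)` whose
`Φ`-orbit is not `{ρ}` yields a gentle quiver `𝚫'` with
`𝒩_{𝚫'} = 𝒩_𝚫 ∖ {ρ}`,
`𝒩_{𝚫'}/ℤ = {𝒪 ∈ 𝒩_𝚫/ℤ ∣ 𝒪 ≠ ℤ·ρ} ∪ {(ℤ·ρ) ∖ {ρ}}`,
`𝒞_{𝚫'} = 𝒞_𝚫 ∪ {α, β, γ_ρ}` and
`𝒞_{𝚫'}/ℤ = 𝒞_𝚫/ℤ ∪ {{α, β, γ_ρ}}` (for compatible choices of `σ, τ`). -/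
theorem stmt5 (Q Q' : QuivRel) (hQ : IsGentle Q)
    (st : SigmaTau Q) (st' : SigmaTau Q')
    (hst : ∀ a ∈ Q.A, st'.σ a = st.σ a ∧ st'.τ a = st.τ a)
    (ρ : ℕ × ℕ) (hiso : Isolated Q st ρ) (γ : ℕ × ℕ → ℕ)
    (hc : IsCompletion Q {ρ} γ Q')
    (hZ : {w : Thread | Relation.EqvGen (PhiRel Q st) (.arrows [ρ.1, ρ.2]) w} ≠
        {Thread.arrows [ρ.1, ρ.2]}) :
    ({w : Thread | InN Q' st' w} =
        {w : Thread | InN Q st w} \ {Thread.arrows [ρ.1, ρ.2]}) ∧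
    ({O : Set Thread | NOrbit Q' st' O} =
        {O : Set Thread | NOrbit Q st O ∧
            O ≠ {w | Relation.EqvGen (PhiRel Q st) (.arrows [ρ.1, ρ.2]) w}} ∪
          {{w | Relation.EqvGen (PhiRel Q st) (.arrows [ρ.1, ρ.2]) w} \
              {Thread.arrows [ρ.1, ρ.2]}}) ∧
    ({a : ℕ | InC Q' st' a} = {a : ℕ | InC Q st a} ∪ {ρ.1, ρ.2, γ ρ}) ∧
    ({O : Set ℕ | COrbit Q' st' O} =
        {O : Set ℕ | COrbit Q st O} ∪ {({ρ.1, ρ.2, γ ρ} : Set ℕ)}) := by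
  obtain ⟨α, β⟩ := ρ
  obtain ⟨hrel, hr⟩ := hiso
  generalize hg : γ (α, β) = g at *
  simp only at hr hrel hZ ⊢
  have hN : Nice Q := ⟨hQ.2.1, fun a b h => hQ.2.2.2.1 (a, b) h⟩
  obtain ⟨hα, hβ, hs⟩ := hN.2 _ _ hrel
  have mem1 : (α, β) ∈ ({(α, β)} : Finset (ℕ × ℕ)) := Finset.mem_singleton_self _
  have fresh : g ∉ Q.A := hg ▸ hc.fresh _ mem1
  have memA : ∀ a, a ∈ Q'.A ↔ a ∈ Q.A ∨ a = g := by
    intro a; rw [hc.A_eq]; simp [hg]; tauto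
  have E : Ext Q Q' st st' g :=
    { fresh := fresh
      V_eq := hc.V_eq
      mem := memA
      src := hc.src_old
      tgt := hc.tgt_old
      σ := fun a ha => (hst a ha).1
      τ := fun a ha => (hst a ha).2 }
  have srcg : Q'.src g = Q.tgt α := hg ▸ hc.src_new _ mem1
  have tgtg : Q'.tgt g = Q.src β := hg ▸ hc.tgt_new _ mem1
  have relm : ∀ a b, (a, b) ∈ Q'.rel ↔ (a, b) ∈ Q.rel ∨ (a = g ∧ b = α) ∨ (a = β ∧ b = g) := by
    intro a b; rw [hc.rel_eq]; simp [hg]; tauto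
  have gA : g ∈ Q'.A := (memA g).2 (.inr rfl)
  have αA : α ∈ Q'.A := (memA α).2 (.inl hα)
  have βA : β ∈ Q'.A := (memA β).2 (.inl hβ)
  have hN' : Nice Q' := by
    constructor
    · intro a ha
      rw [hc.V_eq]
      rcases (memA a).1 ha with ha | rfl
      · rw [hc.src_old a ha, hc.tgt_old a ha]; exact hN.1 a ha
      · rw [srcg, tgtg]; exact ⟨(hN.1 α hα).2, (hN.1 β hβ).1⟩
    · intro a b h
      rcases (relm a b).1 h with h | ⟨rfl, rfl⟩ | ⟨rfl, rfl⟩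
      · obtain ⟨x, y, z⟩ := hN.2 a b h
        refine ⟨(memA a).2 (.inl x), (memA b).2 (.inl y), ?_⟩
        rw [hc.src_old a x, hc.tgt_old b y, z]
      · exact ⟨gA, αA, by rw [srcg, hc.tgt_old _ hα]⟩
      · exact ⟨βA, gA, by rw [tgtg, hc.src_old _ hβ]⟩
  have σg' : st'.σ g = st'.τ α :=
    (st'.rel_iff g gA α αA (by rw [srcg, hc.tgt_old _ hα])).1
      ((relm _ _).2 (.inr (.inl ⟨rfl, rfl⟩)))
  have τg' : st'.σ β = st'.τ g :=
    (st'.rel_iff β βA g gA (by rw [tgtg, hc.src_old _ hβ])).1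
      ((relm _ _).2 (.inr (.inr ⟨rfl, rfl⟩)))
  have σα : st.σ α = st.τ β := (st.rel_iff α hα β hβ hs).1 hrel
  have h1 : (Q'.src g, st'.σ g) = en Q st (.arrows [α, β]) := by
    rw [srcg, σg', E.τ α hα]; rfl
  have h2 : (Q'.tgt g, st'.τ g) = stt Q st (.arrows [α, β]) := by
    rw [tgtg, ← τg', E.σ β hβ]; rfl
  have hpp : ¬ PhiRel Q st (.arrows [α, β]) (.arrows [α, β]) := by
    intro h
    apply hZ
    ext w
    simp only [Set.mem_setOf_eq, Set.mem_singleton_iff]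
    constructor
    · intro e
      have := eqvGen_fix {z | z = Thread.arrows [α, β]} (fun x y hxy => by
        simp only [Set.mem_setOf_eq]
        constructor
        · rintro rfl; exact phi_fun hN hxy h
        · rintro rfl; exact phi_inj hN hxy h) e
      exact this.1 rfl
    · rintro rfl; exact .refl _
  have hNN : ∀ w, InN Q' st' w ↔ InN Q st w ∧ w ≠ .arrows [α, β] :=
    fun w => (E.inN hN hN' hr h1 h2 w).1
  have hphi := E.phi hN hN' hr h1 h2 hpp
  have heqv : ∀ x y, x ≠ Thread.arrows [α, β] →
      (Relation.EqvGen (PhiRel Q' st') x y ↔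
        Relation.EqvGen (PhiRel Q st) x y ∧ y ≠ .arrows [α, β]) := fun x y hx =>
    eqvGen_remove (r := PhiRel Q st) (fun _ _ _ => phi_fun hN) (fun _ _ _ => phi_inj hN) hpp hphi hx
  -- the set of arrows of maximal antipaths
  have hCC : ∀ a, InC Q' st' a ↔ InC Q st a ∨ a = α ∨ a = β ∨ a = g := by
    intro a
    have aux : ∀ l, InN Q st (.arrows l) → (α ∈ l ∨ β ∈ l) → l = [α, β] := by
      rintro l hl (h | h)
      · have := N_eq_of_mem hN hl hr (a := α) h (by simp [arr])
        simpa using this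
      · have := N_eq_of_mem hN hl hr (a := β) h (by simp [arr])
        simpa using this
    constructor
    · rintro ⟨ha, hn⟩
      by_contra hcon
      simp only [not_or] at hcon
      obtain ⟨c1, c2, c3, c4⟩ := hcon
      apply c1
      refine ⟨((memA a).1 ha).resolve_right c4, ?_⟩
      rintro ⟨l, hl, hal⟩
      refine hn ⟨l, (hNN _).2 ⟨hl, ?_⟩, hal⟩
      rintro e
      simp only [Thread.arrows.injEq] at e
      subst e
      simp [c2, c3] at hal
    · rintro (⟨ha, hn⟩ | rfl | rfl | rfl)
      · refine ⟨(memA a).2 (.inl ha), ?_⟩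
        rintro ⟨l, hl, hal⟩
        exact hn ⟨l, ((hNN _).1 hl).1, hal⟩
      · refine ⟨αA, ?_⟩
        rintro ⟨l, hl, hal⟩
        obtain ⟨x, y⟩ := (hNN _).1 hl
        exact y (by rw [aux l x (.inl hal)])
      · refine ⟨βA, ?_⟩
        rintro ⟨l, hl, hal⟩
        obtain ⟨x, y⟩ := (hNN _).1 hl
        exact y (by rw [aux l x (.inr hal)])
      · refine ⟨gA, ?_⟩
        rintro ⟨l, hl, hal⟩
        obtain ⟨x, y⟩ := (hNN _).1 hl
        exact fresh (x.1.2.1 _ hal)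
  have nCα : ¬ InC Q st α := fun h => h.2 ⟨_, hr, by simp⟩
  have nCβ : ¬ InC Q st β := fun h => h.2 ⟨_, hr, by simp⟩
  have nCg : ¬ InC Q st g := fun h => fresh h.1
  have pαβ : PsiRel Q' st' α β := ⟨(hCC _).2 (by simp), (hCC _).2 (by simp), by
    rw [E.tgt _ hβ, E.src _ hα, hs], by rw [E.τ _ hβ, E.σ _ hα, σα]⟩
  have pβg : PsiRel Q' st' β g := ⟨(hCC _).2 (by simp), (hCC _).2 (by simp), by
    rw [tgtg, E.src _ hβ], τg'.symm⟩
  have pgα : PsiRel Q' st' g α := ⟨(hCC _).2 (by simp), (hCC _).2 (by simp), by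
    rw [srcg, E.tgt _ hα], σg'.symm⟩
  have psiF : ∀ a b c, PsiRel Q' st' a b → PsiRel Q' st' a c → b = c := by
    intro a b c h h'
    exact in_inj st' h.2.1.1 h'.2.1.1 (h.2.2.1.trans h'.2.2.1.symm)
      (h.2.2.2.trans h'.2.2.2.symm)
  have psiI : ∀ a b c, PsiRel Q' st' b a → PsiRel Q' st' c a → b = c := by
    intro a b c h h'
    exact out_inj st' h.1.1 h'.1.1 (h.2.2.1.symm.trans h'.2.2.1)
      (h.2.2.2.symm.trans h'.2.2.2)
  have tri : ∀ a b, PsiRel Q' st' a b → (a ∈ ({α, β, g} : Set ℕ) ↔ b ∈ ({α, β, g} : Set ℕ)) := by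
    intro a b h
    simp only [Set.mem_insert_iff, Set.mem_singleton_iff]
    constructor
    · rintro (rfl | rfl | rfl)
      · exact .inr (.inl (psiF _ _ _ h pαβ))
      · exact .inr (.inr (psiF _ _ _ h pβg))
      · exact .inl (psiF _ _ _ h pgα)
    · rintro (rfl | rfl | rfl)
      · exact .inr (.inr (psiI _ _ _ h pgα))
      · exact .inl (psiI _ _ _ h pαβ)
      · exact .inr (.inl (psiI _ _ _ h pβg))
  have psiUp : ∀ a b, PsiRel Q st a b → PsiRel Q' st' a b := by
    rintro a b ⟨ha, hb, h3, h4⟩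
    refine ⟨(hCC a).2 (.inl ha), (hCC b).2 (.inl hb), ?_, ?_⟩
    · rw [E.tgt b hb.1, E.src a ha.1, h3]
    · rw [E.τ b hb.1, E.σ a ha.1, h4]
  have psiDown : ∀ a b, InC Q st a → InC Q st b → PsiRel Q' st' a b → PsiRel Q st a b := by
    rintro a b ha hb ⟨_, _, h3, h4⟩
    refine ⟨ha, hb, ?_, ?_⟩
    · rwa [E.tgt b hb.1, E.src a ha.1] at h3
    · rwa [E.τ b hb.1, E.σ a ha.1] at h4
  have orbC : ∀ a, InC Q st a → ∀ b, Relation.EqvGen (PsiRel Q' st') a b ↔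
      Relation.EqvGen (PsiRel Q st) a b := by
    intro a ha b
    constructor
    · intro e
      have : ∀ x y, Relation.EqvGen (PsiRel Q' st') x y →
          (x = y ∨ (x ∈ ({α, β, g} : Set ℕ) ∧ y ∈ ({α, β, g} : Set ℕ)) ∨
            Relation.EqvGen (PsiRel Q st) x y) ∧
          (x ∈ ({α, β, g} : Set ℕ) ↔ y ∈ ({α, β, g} : Set ℕ)) := by
        intro x y e
        refine ⟨?_, eqvGen_fix _ tri e⟩
        induction e with
        | rel x y h =>
          by_cases hx : x ∈ ({α, β, g} : Set ℕ)
          · exact .inr (.inl ⟨hx, (tri x y h).1 hx⟩)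
          · have hy := fun hy => hx ((tri x y h).2 hy)
            exact .inr (.inr (.rel _ _ (psiDown x y (((hCC x).1 h.1).resolve_right hx)
              (((hCC y).1 h.2.1).resolve_right hy) h)))
        | refl x => exact .inl rfl
        | symm x y _ ih =>
          rcases ih with rfl | ⟨h, h'⟩ | h
          · exact .inl rfl
          · exact .inr (.inl ⟨h', h⟩)
          · exact .inr (.inr h.symm)
        | trans x y z e1 e2 ih1 ih2 =>
          have t1 := eqvGen_fix _ tri e1
          have t2 := eqvGen_fix _ tri e2
          by_cases hx : x ∈ ({α, β, g} : Set ℕ)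
          · exact .inr (.inl ⟨hx, t2.1 (t1.1 hx)⟩)
          · have hy := fun hy => hx (t1.2 hy)
            have k1 : Relation.EqvGen (PsiRel Q st) x y := by
              rcases ih1 with rfl | ⟨h, _⟩ | h
              · exact .refl _
              · exact absurd h hx
              · exact h
            have k2 : Relation.EqvGen (PsiRel Q st) y z := by
              rcases ih2 with rfl | ⟨h, _⟩ | h
              · exact .refl _
              · exact absurd h hy
              · exact h
            exact .inr (.inr (k1.trans _ _ _ k2))
      rcases (this a b e).1 with rfl | ⟨h, _⟩ | h
      · exact .refl _
      · simp only [Set.mem_insert_iff, Set.mem_singleton_iff] at h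
        rcases h with rfl | rfl | rfl
        · exact absurd ha nCα
        · exact absurd ha nCβ
        · exact absurd ha nCg
      · exact h
    · exact fun e => eqvGen_lift id (fun x y h => .rel _ _ (psiUp x y h)) e
  have toα : ∀ b ∈ ({α, β, g} : Set ℕ), Relation.EqvGen (PsiRel Q' st') α b := by
    rintro b (rfl | rfl | rfl)
    · exact .refl _
    · exact .rel _ _ pαβ
    · exact .symm _ _ (.rel _ _ pgα)
  have orbT : ∀ a ∈ ({α, β, g} : Set ℕ),
      {b | Relation.EqvGen (PsiRel Q' st') a b} = ({α, β, g} : Set ℕ) := by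
    intro a ha
    ext b
    constructor
    · intro e; exact (eqvGen_fix _ tri e).1 ha
    · intro hb; exact ((toα a ha).symm).trans _ _ _ (toα b hb)
  have orbN : ∀ w, w ≠ Thread.arrows [α, β] → {w' | Relation.EqvGen (PhiRel Q' st') w w'} =
      {w' | Relation.EqvGen (PhiRel Q st) w w'} \ {Thread.arrows [α, β]} := by
    intro w hw
    ext w'
    simp [heqv w w' hw]
  have orbEq : ∀ w, Relation.EqvGen (PhiRel Q st) (Thread.arrows [α, β]) w →
      {w' | Relation.EqvGen (PhiRel Q st) w w'} =
      {w' | Relation.EqvGen (PhiRel Q st) (Thread.arrows [α, β]) w'} := by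
    intro w h
    ext w'
    exact ⟨fun k => h.trans _ _ _ k, fun k => h.symm.trans _ _ _ k⟩
  refine ⟨?_, ?_, ?_, ?_⟩
  · ext w; simpa using hNN w
  · ext O
    simp only [Set.mem_setOf_eq, Set.mem_union, Set.mem_singleton_iff]
    constructor
    · rintro ⟨w, hw, rfl⟩
      obtain ⟨hw, hne⟩ := (hNN w).1 hw
      rw [orbN w hne]
      by_cases h : Relation.EqvGen (PhiRel Q st) (Thread.arrows [α, β]) w
      · right; rw [orbEq w h]
      · left
        have : {w' | Relation.EqvGen (PhiRel Q st) w w'} \ {Thread.arrows [α, β]} =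
            {w' | Relation.EqvGen (PhiRel Q st) w w'} := by
          apply Set.diff_singleton_eq_self
          exact fun k => h k.symm
        rw [this]
        refine ⟨⟨w, hw, rfl⟩, fun k => h ?_⟩
        have : w ∈ {w' | Relation.EqvGen (PhiRel Q st) w w'} := .refl _
        rw [k] at this
        exact this
    · rintro (⟨⟨w, hw, rfl⟩, hO⟩ | rfl)
      · have h : ¬ Relation.EqvGen (PhiRel Q st) (Thread.arrows [α, β]) w :=
          fun k => hO (orbEq w k)
        have hne : w ≠ .arrows [α, β] := by rintro rfl; exact h (.refl _)
        refine ⟨w, (hNN w).2 ⟨hw, hne⟩, ?_⟩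
        rw [orbN w hne]
        exact (Set.diff_singleton_eq_self fun k => h k.symm).symm
      · obtain ⟨w, hw, hne⟩ : ∃ w, Relation.EqvGen (PhiRel Q st) (Thread.arrows [α, β]) w ∧
            w ≠ .arrows [α, β] := by
          by_contra hcon
          push Not at hcon
          apply hZ
          ext w
          exact ⟨fun k => hcon w k, fun k => by
            rw [Set.mem_singleton_iff] at k; subst k; exact .refl _⟩
        have hwN : InN Q st w := (eqvGen_fix {z | InN Q st z} (fun x y h => by
          simp [h.1, h.2.1]) hw).1 hr
        refine ⟨w, (hNN w).2 ⟨hwN, hne⟩, ?_⟩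
        rw [orbN w hne, orbEq w hw]
  · ext a; simp [hCC a]; tauto
  · ext O
    simp only [Set.mem_setOf_eq, Set.mem_union, Set.mem_singleton_iff]
    constructor
    · rintro ⟨a, ha, rfl⟩
      rcases (hCC a).1 ha with h | h
      · left
        exact ⟨a, h, by ext b; exact orbC a h b⟩
      · right
        exact orbT a h
    · rintro (⟨a, ha, rfl⟩ | rfl)
      · exact ⟨a, (hCC a).2 (.inl ha), by ext b; exact (orbC a ha b).symm⟩
      · exact ⟨α, (hCC α).2 (by simp), (orbT α (by simp)).symm⟩
end GentleQuiv
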